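/- arXiv:2401.11680 — 3 statements merged into one kernel-verified Lean document; each statement's English description precedes it below -/
import Mathlib

section
/- For any preference order σ ∈ {±1}^n, the maximal number of napkinless diners satisfies 0 ≤ ν_max(σ) ≤ ⌊n/3⌋. -/
namespace Napkin

variable {n q : ℕ}

/-- The napkin to the left of seat `s`; napkin `s` itself is the one to the right of
seat `s`, placed between seats `s` and `s + 1` around the circular table. -/
def leftNapkin (s : Fin n) : Fin n := ⟨((s : ℕ) + (n - 1)) % n, Nat.mod_lt _ s.pos⟩

/-- Process the diners `0, 1, …, n-1` in their arrival order.  Here `w i = j` means that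
diner `j` sits in seat `i` (so diner `j` sits in seat `w.symm j`), and `σ j = true`
means diner `j` prefers the napkin to their right.  Each diner takes their preferred
adjacent napkin if it is unclaimed, otherwise the other adjacent napkin if it is
unclaimed, and otherwise is napkinless.  The returned state consists of the set of
claimed napkins and the set of napkinless diners. -/
def dine (σ : Fin n → Bool) (w : Equiv.Perm (Fin n)) :
    Finset (Fin n) × Finset (Fin n) :=
  (List.finRange n).foldl
    (fun st j =>
      let s := w.symm j
      let pref := if σ j then s else leftNapkin s
      let other := if σ j then leftNapkin s else s
      if pref ∉ st.1 then (insert pref st.1, st.2)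
      else if other ∉ st.1 then (insert other st.1, st.2)
      else (st.1, insert j st.2))
    (∅, ∅)

/-- The set of napkinless diners for the seating arrangement `(w, σ)`. -/
def napkinless (σ : Fin n → Bool) (w : Equiv.Perm (Fin n)) : Finset (Fin n) :=
  (dine σ w).2

/-- `ν(w,σ)`, the number of napkinless diners. -/
def nu (σ : Fin n → Bool) (w : Equiv.Perm (Fin n)) : ℕ := (napkinless σ w).card

/-- A seating order puts diner `1` in seat `1` (index `0` here). -/
def IsSeating (w : Equiv.Perm (Fin n)) : Prop :=
  ∀ i : Fin n, (i : ℕ) = 0 → (w i : ℕ) = 0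

instance : DecidablePred (IsSeating (n := n)) := fun w =>
  decidable_of_iff (∀ i : Fin n, (i : ℕ) = 0 → (w i : ℕ) = 0) Iff.rfl

/-- `ν_max(σ)`, the maximal number of napkinless diners over all seating orders. -/
def nuMax (σ : Fin n → Bool) : ℕ :=
  (Finset.univ.filter fun w : Equiv.Perm (Fin n) => IsSeating w).sup (nu σ)

/-- The value `±1` of a napkin preference. -/
def sign (b : Bool) : ℤ := if b then 1 else -1

/-- The drift `h(σ) = max(0, max over prefixes of σ₁ + ⋯ + σᵢ)`. -/
def drift (σ : Fin n → Bool) : ℕ :=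
  (Finset.range (n + 1)).sup fun i =>
    (∑ j ∈ Finset.univ.filter (fun j : Fin n => (j : ℕ) < i), sign (σ j)).toNat

/-- A bench collection: `q` pairwise disjoint triples `aᵢ < bᵢ < cᵢ` in `{1,…,n}`. -/
structure BenchCollection (n q : ℕ) where
  a : Fin q → Fin n
  b : Fin q → Fin n
  c : Fin q → Fin n
  hab : ∀ i, a i < b i
  hbc : ∀ i, b i < c i
  disj : ∀ i j : Fin q, i ≠ j →
    Disjoint ({a i, b i, c i} : Finset (Fin n)) ({a j, b j, c j} : Finset (Fin n))

/-- A bench is balanced when its two smallest members have opposite preferences. -/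
def Balanced (σ : Fin n → Bool) (β : BenchCollection n q) (i : Fin q) : Prop :=
  sign (σ (β.a i)) + sign (σ (β.b i)) = 0

instance (σ : Fin n → Bool) (β : BenchCollection n q) :
    DecidablePred (Balanced σ β) := fun i =>
  decidable_of_iff (sign (σ (β.a i)) + sign (σ (β.b i)) = 0) Iff.rfl

/-- `b(β,σ)`, the number of balanced benches of `β`. -/
def balance (σ : Fin n → Bool) (β : BenchCollection n q) : ℕ :=
  (Finset.univ.filter fun i => Balanced σ β i).card

theorem leftNapkin_inj : Function.Injective (leftNapkin (n := n)) := by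
  intro a b h
  have ha := a.isLt
  have hb := b.isLt
  have h' : ((a : ℕ) + (n - 1)) % n = ((b : ℕ) + (n - 1)) % n := congrArg Fin.val h
  have h2 : (a : ℕ) ≡ b [MOD n] := Nat.ModEq.add_right_cancel' (n - 1) h'
  exact Fin.ext (Nat.ModEq.eq_of_lt_of_lt h2 ha hb)

/-- One step of the dining process. -/
def step (σ : Fin n → Bool) (w : Equiv.Perm (Fin n))
    (st : Finset (Fin n) × Finset (Fin n)) (j : Fin n) :
    Finset (Fin n) × Finset (Fin n) :=
  let s := w.symm j
  let pref := if σ j then s else leftNapkin s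
  let other := if σ j then leftNapkin s else s
  if pref ∉ st.1 then (insert pref st.1, st.2)
  else if other ∉ st.1 then (insert other st.1, st.2)
  else (st.1, insert j st.2)

/-- The invariant: `R` took right, `L` took left. -/
def Inv (w : Equiv.Perm (Fin n)) (l : List (Fin n))
    (st : Finset (Fin n) × Finset (Fin n)) (R L : Finset (Fin n)) : Prop :=
  (∀ j, j ∈ R → j ∉ L ∧ j ∉ st.2 ∧ j ∈ l) ∧ (∀ j, j ∈ L → j ∉ st.2 ∧ j ∈ l) ∧
  (∀ j, j ∈ st.2 → j ∈ l ∧ w.symm j ∈ st.1 ∧ leftNapkin (w.symm j) ∈ st.1) ∧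
  (∀ c, c ∈ st.1 → (∃ j ∈ R, w.symm j = c) ∨ ∃ j ∈ L, leftNapkin (w.symm j) = c)

theorem step_cases (σ : Fin n → Bool) (w : Equiv.Perm (Fin n))
    (st : Finset (Fin n) × Finset (Fin n)) (j : Fin n) :
    step σ w st j = (insert (w.symm j) st.1, st.2) ∨
    step σ w st j = (insert (leftNapkin (w.symm j)) st.1, st.2) ∨
    (step σ w st j = (st.1, insert j st.2) ∧ w.symm j ∈ st.1 ∧
      leftNapkin (w.symm j) ∈ st.1) := by
  unfold step
  cases σ j <;> by_cases h1 : w.symm j ∈ st.1 <;>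
    by_cases h2 : leftNapkin (w.symm j) ∈ st.1 <;> simp [h1, h2]

theorem inv_fold (σ : Fin n → Bool) (w : Equiv.Perm (Fin n)) (l : List (Fin n))
    (hl : l.Nodup) : ∃ R L, Inv w l (l.foldl (step σ w) (∅, ∅)) R L := by
  induction l using List.reverseRecOn with
  | nil => exact ⟨∅, ∅, by simp [Inv]⟩
  | append_singleton l j ih =>
    have hl' : l.Nodup ∧ j ∉ l := by
      rw [List.nodup_append] at hl
      exact ⟨hl.1, fun h => hl.2.2 j h j (by simp) rfl⟩
    obtain ⟨R, L, h1, h2, h3, h4⟩ := ih hl'.1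
    have hj := hl'.2
    rw [List.foldl_append, List.foldl_cons, List.foldl_nil]
    generalize l.foldl (step σ w) (∅, ∅) = st at *
    obtain ⟨C, M⟩ := st
    rcases step_cases σ w (C, M) j with h | h | ⟨h, ha, hb⟩
    · refine ⟨insert j R, L, ?_⟩
      rw [h]
      refine ⟨?_, ?_, ?_, ?_⟩ <;> simp only [List.mem_append, List.mem_singleton, Finset.mem_insert] at * <;> grind
    · refine ⟨R, insert j L, ?_⟩
      rw [h]
      refine ⟨?_, ?_, ?_, ?_⟩ <;> simp only [List.mem_append, List.mem_singleton, Finset.mem_insert] at * <;> grind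
    · refine ⟨R, L, ?_⟩
      rw [h]
      refine ⟨?_, ?_, ?_, ?_⟩ <;> simp only [List.mem_append, List.mem_singleton, Finset.mem_insert] at * <;> grind

theorem nu_le (σ : Fin n → Bool) (w : Equiv.Perm (Fin n)) : 3 * nu σ w ≤ n := by
  obtain ⟨R, L, h1, h2, h3, h4⟩ := inv_fold σ w (List.finRange n) (List.nodup_finRange n)
  have e : nu σ w = ((List.finRange n).foldl (step σ w) (∅, ∅)).2.card := rfl
  rw [e]
  generalize (List.finRange n).foldl (step σ w) (∅, ∅) = st at *
  obtain ⟨C, M⟩ := st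
  simp only at *
  have inj1 : Function.Injective (fun j => w.symm j) := w.symm.injective
  have inj2 : Function.Injective (fun j => leftNapkin (w.symm j)) :=
    leftNapkin_inj.comp inj1
  have cL : M.card ≤ L.card := by
    rw [← Finset.card_image_of_injective M inj1, ← Finset.card_image_of_injective L inj2]
    apply Finset.card_le_card
    intro c hc
    obtain ⟨j, hj, rfl⟩ := Finset.mem_image.1 hc
    rcases h4 _ (h3 j hj).2.1 with ⟨k, hk, hkj⟩ | ⟨k, hk, hkj⟩
    · have : k = j := inj1 hkj
      subst this
      exact absurd hj (h1 k hk).2.1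
    · exact Finset.mem_image.2 ⟨k, hk, hkj⟩
  have cR : M.card ≤ R.card := by
    rw [← Finset.card_image_of_injective M inj2, ← Finset.card_image_of_injective R inj1]
    apply Finset.card_le_card
    intro c hc
    obtain ⟨j, hj, rfl⟩ := Finset.mem_image.1 hc
    rcases h4 _ (h3 j hj).2.2 with ⟨k, hk, hkj⟩ | ⟨k, hk, hkj⟩
    · exact Finset.mem_image.2 ⟨k, hk, hkj⟩
    · have : k = j := inj2 hkj
      subst this
      exact absurd hj (h2 k hk).1
  have d1 : Disjoint R L := Finset.disjoint_left.2 fun j hj => (h1 j hj).1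
  have d2 : Disjoint (R ∪ L) M := Finset.disjoint_left.2 fun j hj => by
    rcases Finset.mem_union.1 hj with h | h
    · exact (h1 j h).2.1
    · exact (h2 j h).1
  have t := Finset.card_le_univ ((R ∪ L) ∪ M)
  rw [Finset.card_union_of_disjoint d2, Finset.card_union_of_disjoint d1, Fintype.card_fin] at t
  omega

/-- For any preference order `σ`, `0 ≤ ν_max(σ) ≤ ⌊n/3⌋`. -/
theorem statement1 (n : ℕ) (hn : 1 ≤ n) (σ : Fin n → Bool) :
    0 ≤ nuMax σ ∧ nuMax σ ≤ n / 3 := by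
  refine ⟨Nat.zero_le _, Finset.sup_le fun w _ => ?_⟩
  have := nu_le σ w
  omega

end Napkin
end

section
/- For all integers n ≥ h ≥ 0, the number of sequences σ ∈ {±1}^n with drift h(σ) = h equals the binomial coefficient C(n, ⌊(n−h)/2⌋). Equivalently, the number of lattice paths of length n with steps N and E, starting at (0,0), whose drift equals h is C(n, ⌊(n−h)/2⌋). -/
namespace Napkin

variable {n q : ℕ}

def psum (σ : Fin n → Bool) (i : ℕ) : ℤ :=
  ∑ j : Fin n, if (j : ℕ) < i then sign (σ j) else 0

lemma psum_zero (σ : Fin n → Bool) : psum σ 0 = 0 := by simp [psum]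

lemma psum_cons (b : Bool) (σ : Fin n → Bool) (i : ℕ) :
    psum (Fin.cons b σ : Fin (n+1) → Bool) (i+1) = sign b + psum σ i := by
  simp [psum, Fin.sum_univ_succ]

lemma drift_le (σ : Fin n → Bool) (k : ℕ) :
    drift σ ≤ k ↔ ∀ i ≤ n, psum σ i ≤ k := by
  simp only [drift, Finset.sup_le_iff, Finset.mem_range, Finset.sum_filter, Int.toNat_le,
    psum, Nat.lt_succ_iff]

lemma drift_cons_le (b : Bool) (σ : Fin n → Bool) (k : ℕ) :
    drift (Fin.cons b σ : Fin (n+1) → Bool) ≤ k ↔ ∀ i ≤ n, sign b + psum σ i ≤ k := by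
  rw [drift_le]
  constructor
  · intro h i hi
    rw [← psum_cons]
    exact h _ (by omega)
  · intro h i hi
    cases i with
    | zero => rw [psum_zero]; positivity
    | succ i => rw [psum_cons]; exact h _ (by omega)

lemma drift_true (σ : Fin n → Bool) :
    drift (Fin.cons true σ : Fin (n+1) → Bool) = drift σ + 1 := by
  refine eq_of_forall_ge_iff fun k => ?_
  rw [drift_cons_le]
  cases k with
  | zero =>
    simp only [sign]
    constructor
    · intro h
      have := h 0 (by omega)
      rw [psum_zero] at this
      simp at this
    · intro h; omega
  | succ k =>
    rw [Nat.add_le_add_iff_right, drift_le]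
    refine forall₂_congr fun i _ => ?_
    simp only [sign]
    push_cast
    omega

lemma drift_false (σ : Fin n → Bool) :
    drift (Fin.cons false σ : Fin (n+1) → Bool) = drift σ - 1 := by
  refine eq_of_forall_ge_iff fun k => ?_
  rw [drift_cons_le, Nat.sub_le_iff_le_add, drift_le]
  refine forall₂_congr fun i _ => ?_
  simp [sign]
  omega

def cnt (n h : ℕ) : ℕ :=
  ((Finset.univ : Finset (Fin n → Bool)).filter fun σ => drift σ = h).card

lemma cnt_succ (n h : ℕ) : cnt (n+1) h =
    ((Finset.univ : Finset (Fin n → Bool)).filter fun σ => drift σ + 1 = h).card +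
    ((Finset.univ : Finset (Fin n → Bool)).filter fun σ => drift σ - 1 = h).card := by
  unfold cnt
  simp only [Finset.card_filter]
  rw [← (Fin.consEquiv (fun _ : Fin (n+1) => Bool)).sum_comp, Fintype.sum_prod_type]
  simp [Fin.consEquiv, drift_true, drift_false]

lemma cnt_succ_zero (n : ℕ) : cnt (n+1) 0 = cnt n 0 + cnt n 1 := by
  rw [cnt_succ]
  simp only [cnt, Finset.card_filter, ← Finset.sum_add_distrib]
  refine Finset.sum_congr rfl fun σ _ => ?_
  generalize drift σ = d
  rcases d with _ | _ | d <;> simp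

lemma cnt_succ_succ (n h : ℕ) : cnt (n+1) (h+1) = cnt n h + cnt n (h+2) := by
  rw [cnt_succ]
  simp only [cnt]
  congr 2
  · ext σ; simp
  · ext σ
    simp only [Finset.mem_filter, Finset.mem_univ, true_and]
    omega

lemma cnt_eq (n : ℕ) : ∀ h, cnt n h = if h ≤ n then n.choose ((n - h) / 2) else 0 := by
  induction n with
  | zero =>
    intro h
    by_cases hh : h = 0
    · subst hh; simp [cnt, drift]
    · have : ¬ 0 = h := fun e => hh e.symm
      simp [cnt, drift, hh, this]
  | succ n ih =>
    intro h
    cases h with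
    | zero =>
      rw [cnt_succ_zero, ih, ih]
      rcases Nat.even_or_odd' n with ⟨k, rfl | rfl⟩
      · cases k with
        | zero => simp
        | succ k =>
          rw [if_pos (by omega), if_pos (by omega), if_pos (by omega),
            show (2*(k+1)-0)/2 = k+1 by omega, show (2*(k+1)-1)/2 = k by omega,
            show (2*(k+1)+1-0)/2 = k+1 by omega, Nat.choose_succ_succ, add_comm]
      · rw [if_pos (by omega), if_pos (by omega), if_pos (by omega),
            show (2*k+1-0)/2 = k by omega, show (2*k+1-1)/2 = k by omega,
            show (2*k+1+1-0)/2 = k+1 by omega, Nat.choose_succ_succ (2*k+1) k,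
            Nat.succ_eq_add_one, Nat.choose_symm_half]
    | succ h =>
      rw [cnt_succ_succ, ih, ih]
      by_cases h1 : h + 2 ≤ n
      · obtain ⟨m, rfl⟩ := Nat.exists_eq_add_of_le h1
        rw [if_pos (by omega), if_pos (by omega), if_pos (by omega),
            show (h+2+m-h)/2 = m/2+1 by omega, show (h+2+m-(h+2))/2 = m/2 by omega,
            show (h+2+m+1-(h+1))/2 = m/2+1 by omega, Nat.choose_succ_succ (h+2+m), add_comm]
      · by_cases h2 : h ≤ n
        · rw [if_pos h2, if_neg h1, if_pos (by omega), show (n-h)/2 = 0 by omega,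
            show (n+1-(h+1))/2 = 0 by omega]
          simp
        · rw [if_neg h2, if_neg h1, if_neg (by omega)]

/-- For `n ≥ h ≥ 0`, the number of sequences `σ ∈ {±1}ⁿ` (equivalently,
`{N,E}` lattice paths of length `n` from the origin) with drift exactly `h` is the
binomial coefficient `C(n, ⌊(n-h)/2⌋)`. -/
theorem statement10 (n h : ℕ) (hh : h ≤ n) :
    ((Finset.univ : Finset (Fin n → Bool)).filter fun σ => drift σ = h).card
      = n.choose ((n - h) / 2) := by
  have := cnt_eq n h
  rw [if_pos hh] at this
  exact this

end Napkin
end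

section
/- Let n ≥ 3 and q = ⌊n/3⌋. The expected number of napkinless diners under an optimal strategy, when all 2^n preference orders are equally likely, is E_n = 2^{−n} ∑_{σ∈{±1}^n} ν_max(σ) = q − (1/2^{n−2}) ∑_{k=0}^{q−1} (q−k)·C(n,k). Equivalently, ∑_{σ∈{±1}^n} ν_max(σ) = 2^n·q − 4·∑_{k=0}^{q−1} (q−k)·C(n,k). -/
namespace Napkin

variable {n q : ℕ}

section process
set_option linter.unusedSectionVars false
variable [NeZero n]

def nap (b : Bool) (s : Fin n) : Fin n := if b then s else s - 1
def nbr (b : Bool) (s : Fin n) : Fin n := if b then s + 1 else s - 1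

lemma leftNapkin_eq (hn : 2 ≤ n) (s : Fin n) : leftNapkin s = s - 1 := by
  apply Fin.ext
  have h1 : ((1 : Fin n) : ℕ) = 1 := by
    rw [Fin.val_one', Nat.mod_eq_of_lt (by omega)]
  rw [Fin.sub_def]
  simp only [leftNapkin, h1]
  congr 1; omega

lemma nap_eq (b c : Bool) (s t : Fin n) (h : nap b s = nap c t) :
    (b = c ∧ s = t) ∨ (c = !b ∧ t = nbr b s) := by
  cases b <;> cases c <;> simp [nap, nbr] at * <;> grind

lemma nap_nbr (b : Bool) (s : Fin n) : nap (!b) (nbr b s) = nap b s := by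
  cases b <;> simp [nap, nbr]

lemma nbr_nbr (b : Bool) (s : Fin n) : nbr (!b) (nbr b s) = s := by
  cases b <;> simp [nbr]

def stepf (σ : Fin n → Bool) (w : Equiv.Perm (Fin n)) (st : Finset (Fin n) × Finset (Fin n)) (j : Fin n) :
    Finset (Fin n) × Finset (Fin n) :=
      let s := w.symm j
      let pref := if σ j then s else leftNapkin s
      let other := if σ j then leftNapkin s else s
      if pref ∉ st.1 then (insert pref st.1, st.2)
      else if other ∉ st.1 then (insert other st.1, st.2)
      else (st.1, insert j st.2)

lemma stepf_eq (hn : 2 ≤ n) (σ : Fin n → Bool) (w : Equiv.Perm (Fin n)) (st : Finset (Fin n) × Finset (Fin n)) (j : Fin n) :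
    stepf σ w st j = if nap (σ j) (w.symm j) ∉ st.1 then (insert (nap (σ j) (w.symm j)) st.1, st.2)
      else if nap (!σ j) (w.symm j) ∉ st.1 then (insert (nap (!σ j) (w.symm j)) st.1, st.2)
      else (st.1, insert j st.2) := by
  unfold stepf
  rcases h : σ j <;> simp [nap, leftNapkin_eq hn]

def stAt (σ : Fin n → Bool) (w : Equiv.Perm (Fin n)) (i : ℕ) : Finset (Fin n) × Finset (Fin n) :=
  ((List.finRange n).take i).foldl (stepf σ w) (∅, ∅)

lemma dine_eq (σ : Fin n → Bool) (w : Equiv.Perm (Fin n)) : dine σ w = stAt σ w n := by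
  unfold dine stAt
  rw [List.take_of_length_le (by simp)]
  rfl

lemma stAt_succ (σ : Fin n → Bool) (w : Equiv.Perm (Fin n)) (i : ℕ) (hi : i < n) :
    stAt σ w (i+1) = stepf σ w (stAt σ w i) ⟨i, hi⟩ := by
  unfold stAt
  rw [List.take_add_one]
  simp [List.foldl_append, hi]

def tk (σ : Fin n → Bool) (w : Equiv.Perm (Fin n)) (j : Fin n) : Option Bool :=
  if nap (σ j) (w.symm j) ∉ (stAt σ w j).1 then some (σ j)
  else if nap (!σ j) (w.symm j) ∉ (stAt σ w j).1 then some (!σ j) else none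

lemma mem_stAt (hn : 2 ≤ n) (σ : Fin n → Bool) (w : Equiv.Perm (Fin n)) (i : ℕ) (hi : i ≤ n) :
    (∀ x, x ∈ (stAt σ w i).1 ↔ ∃ j : Fin n, (j:ℕ) < i ∧ ∃ b, tk σ w j = some b ∧ nap b (w.symm j) = x) ∧
    (∀ j, j ∈ (stAt σ w i).2 ↔ (j:ℕ) < i ∧ tk σ w j = none) := by
  induction i with
  | zero => simp [stAt]
  | succ i ih =>
    obtain ⟨ih1, ih2⟩ := ih (by omega)
    have hlt : ∀ j : Fin n, (j:ℕ) < i + 1 ↔ (j : ℕ) < i ∨ j = ⟨i, hi⟩ := by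
      intro j; rw [Fin.ext_iff]; simp only; omega
    have ht : tk σ w ⟨i, hi⟩ = if nap (σ ⟨i, hi⟩) (w.symm ⟨i, hi⟩) ∉ (stAt σ w i).1 then some (σ ⟨i, hi⟩)
        else if nap (!σ ⟨i, hi⟩) (w.symm ⟨i, hi⟩) ∉ (stAt σ w i).1 then some (!σ ⟨i, hi⟩) else none := rfl
    rw [stAt_succ σ w i hi, stepf_eq hn]
    simp only [hlt, or_and_right, exists_or, ← ih1, ← ih2, exists_eq_left]
    by_cases h1 : nap (σ ⟨i, hi⟩) (w.symm ⟨i, hi⟩) ∉ (stAt σ w i).1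
    · rw [if_pos h1] at ht ⊢
      simp only [ht, Finset.mem_insert]
      constructor
      · intro x; simp [eq_comm, or_comm]
      · intro x
        constructor
        · exact Or.inl
        · rintro (h | ⟨rfl, h⟩)
          · exact h
          · rw [ht] at h; simp at h
    · rw [if_neg h1] at ht ⊢
      by_cases h2 : nap (!σ ⟨i, hi⟩) (w.symm ⟨i, hi⟩) ∉ (stAt σ w i).1
      · rw [if_pos h2] at ht ⊢
        simp only [ht, Finset.mem_insert]
        constructor
        · intro x; simp [eq_comm, or_comm]
        · intro x
          constructor
          · exact Or.inl
          · rintro (h | ⟨rfl, h⟩)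
            · exact h
            · rw [ht] at h; simp at h
      · rw [if_neg h2] at ht ⊢
        simp only [ht, Finset.mem_insert]
        constructor
        · intro x; simp
        · intro x
          constructor
          · rintro (rfl | h)
            · exact Or.inr ⟨rfl, ht⟩
            · exact Or.inl h
          · rintro (h | ⟨rfl, h⟩)
            · exact Or.inr h
            · exact Or.inl rfl

lemma mem_napkinless (hn : 2 ≤ n) (σ : Fin n → Bool) (w : Equiv.Perm (Fin n)) (j : Fin n) :
    j ∈ napkinless σ w ↔ tk σ w j = none := by
  unfold napkinless
  rw [dine_eq, (mem_stAt hn σ w n le_rfl).2]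
  simp

/-- the diner sitting next to `j` on side `b` -/
def nxt (w : Equiv.Perm (Fin n)) (b : Bool) (j : Fin n) : Fin n := w (nbr b (w.symm j))

lemma nxt_inj (w : Equiv.Perm (Fin n)) (b : Bool) : Function.Injective (nxt w b) := by
  intro x y h
  have := congrArg (fun z => w (nbr (!b) (w.symm z))) h
  simpa [nxt, nbr_nbr] using this

lemma taken_iff (hn : 2 ≤ n) (σ : Fin n → Bool) (w : Equiv.Perm (Fin n)) (b : Bool) (j : Fin n) :
    nap b (w.symm j) ∈ (stAt σ w j).1 ↔ nxt w b j < j ∧ tk σ w (nxt w b j) = some (!b) := by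
  rw [(mem_stAt hn σ w j j.2.le).1]
  constructor
  · rintro ⟨i, hi, c, hc, h⟩
    rcases nap_eq _ _ _ _ h.symm with ⟨_, h2⟩ | ⟨h1, h2⟩
    · have := w.symm.injective h2
      subst this; omega
    · have : nxt w b j = i := by rw [nxt, ← h2]; simp
      rw [this, hc, h1]; exact ⟨hi, rfl⟩
  · rintro ⟨h1, h2⟩
    refine ⟨_, h1, _, h2, ?_⟩
    simp [nxt, nap_nbr]

lemma tk_step (hn : 2 ≤ n) (σ : Fin n → Bool) (w : Equiv.Perm (Fin n)) (b : Bool) (j : Fin n)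
    (h : tk σ w j = none ∨ (tk σ w j = some (!b) ∧ σ j = b)) :
    nxt w b j < j ∧ tk σ w (nxt w b j) = some (!b) := by
  rw [← taken_iff hn]
  by_contra hc
  rw [tk] at h
  rcases hs : σ j <;> cases b <;> simp_all <;> split_ifs at h

/-- the witness -/
lemma exists_wit (hn : 2 ≤ n) (σ : Fin n → Bool) (w : Equiv.Perm (Fin n)) (b : Bool) (j : Fin n)
    (h : tk σ w j = some (!b)) :
    ∃ d : ℕ, (∀ e ≤ d, tk σ w ((nxt w b)^[e] j) = some (!b)) ∧ σ ((nxt w b)^[d] j) = !b ∧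
      (nxt w b)^[d] j ≤ j := by
  induction j using WellFoundedLT.induction with
  | ind j ih =>
    by_cases hs : σ j = b
    · obtain ⟨h1, h2⟩ := tk_step hn σ w b j (Or.inr ⟨h, hs⟩)
      obtain ⟨d, hd1, hd2, hd3⟩ := ih _ h1 h2
      refine ⟨d+1, ?_, hd2, hd3.trans h1.le⟩
      intro e he
      cases e with
      | zero => exact h
      | succ e => exact hd1 e (by omega)
    · refine ⟨0, ?_, ?_, le_rfl⟩
      · intro e he
        obtain rfl : e = 0 := by omega
        exact h
      · cases b <;> simp_all

lemma exists_F (hn : 2 ≤ n) (σ : Fin n → Bool) (w : Equiv.Perm (Fin n)) (b : Bool) :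
    ∃ F : Fin n → Fin n, (∀ j, tk σ w j = none → F j < j ∧ σ (F j) = (!b) ∧ tk σ w (F j) = some (!b)) ∧
      (∀ i j, tk σ w i = none → tk σ w j = none → F i = F j → i = j) := by
  have : ∀ j, ∃ d, tk σ w j = none → (∀ e ≤ d, tk σ w ((nxt w b)^[e+1] j) = some (!b)) ∧ σ ((nxt w b)^[d+1] j) = (!b) ∧
      (nxt w b)^[d+1] j < j := by
    intro j
    by_cases h : tk σ w j = none
    · obtain ⟨h1, h2⟩ := tk_step hn σ w b j (Or.inl h)
      obtain ⟨d, hd1, hd2, hd3⟩ := exists_wit hn σ w b _ h2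
      exact ⟨d, fun _ => ⟨hd1, hd2, hd3.trans_lt h1⟩⟩
    · exact ⟨0, fun h' => absurd h' h⟩
  choose d hd using this
  refine ⟨fun j => (nxt w b)^[d j + 1] j, fun j hj => ⟨(hd j hj).2.2, (hd j hj).2.1, (hd j hj).1 _ le_rfl⟩, ?_⟩
  have key : ∀ i j, tk σ w i = none → tk σ w j = none → (nxt w b)^[d i + 1] i = (nxt w b)^[d j + 1] j → d i ≤ d j → i = j := by
    intro i j hi hj he hle
    obtain ⟨c, hc⟩ := Nat.exists_eq_add_of_le hle
    have h1 : (nxt w b)^[d j + 1] j = (nxt w b)^[d i + 1] ((nxt w b)^[c] j) := by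
      rw [← Function.iterate_add_apply]; congr 1; omega
    rw [h1] at he
    have h2 := (nxt_inj w b).iterate _ he
    cases c with
    | zero => exact h2
    | succ c =>
      have := (hd j hj).1 c (by omega)
      rw [← h2, hi] at this
      simp at this
  intro i j hi hj he
  rcases le_total (d i) (d j) with h | h
  · exact key i j hi hj he h
  · exact (key j i hj hi he.symm h).symm

/-- good seatings -/
lemma tk_good (hn : 2 ≤ n) (σ : Fin n → Bool) (w : Equiv.Perm (Fin n)) (M : Fin n → Prop)
    (h1 : ∀ j, ¬ M j → M (nxt w (σ j) j) ∨ σ (nxt w (σ j) j) = σ j)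
    (h2 : ∀ j, M j → ∀ b, ¬ M (nxt w b j) ∧ σ (nxt w b j) = (!b) ∧ nxt w b j < j) (j : Fin n) :
    (M j → tk σ w j = none) ∧ (¬ M j → tk σ w j = some (σ j)) := by
  induction j using WellFoundedLT.induction with
  | ind j ih =>
    constructor
    · intro hM
      have : ∀ b, nap b (w.symm j) ∈ (stAt σ w j).1 := by
        intro b
        obtain ⟨a1, a2, a3⟩ := h2 j hM b
        rw [taken_iff hn]
        exact ⟨a3, by rw [(ih _ a3).2 a1, a2]⟩
      simp [tk, this]
    · intro hM
      have : nap (σ j) (w.symm j) ∉ (stAt σ w j).1 := by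
        rw [taken_iff hn]
        rintro ⟨a1, a2⟩
        by_cases hM' : M (nxt w (σ j) j)
        · rw [(ih _ a1).1 hM'] at a2; simp at a2
        · rw [(ih _ a1).2 hM'] at a2
          rcases h1 j hM with h | h
          · exact hM' h
          · rw [h] at a2; simp at a2
      simp [tk, this]

end process

/-- partial sums -/
def S (σ : Fin n → Bool) (i : ℕ) : ℤ := ∑ j : Fin n, if (j : ℕ) < i then sign (σ j) else 0

lemma trip_aux (i a b c : ℕ) (s : Bool) (h1 : a < c) (h2 : b < c) :
    |(if c < i then sign s else 0) + (if a < i then sign (!true) else 0) + (if b < i then sign (!false) else 0)| ≤ 1 := by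
  by_cases hc : c < i
  · rw [if_pos hc, if_pos (by omega), if_pos (by omega)]
    cases s <;> simp [sign]
  · rw [if_neg hc]
    split_ifs <;> simp [sign]

lemma nu_upper (hn : 2 ≤ n) (σ : Fin n → Bool) (w : Equiv.Perm (Fin n)) :
    3 * nu σ w ≤ n ∧ ∀ i, |S σ i| + 2 * (nu σ w : ℤ) ≤ n := by
  have : NeZero n := ⟨by omega⟩
  obtain ⟨F, hF, hFi⟩ := exists_F hn σ w true
  obtain ⟨G, hG, hGi⟩ := exists_F hn σ w false
  set N := napkinless σ w with hN
  have hmem : ∀ j ∈ N, tk σ w j = none := fun j hj => (mem_napkinless hn σ w j).1 hj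
  have iF : Set.InjOn F N := fun i hi j hj h => hFi i j (hmem i hi) (hmem j hj) h
  have iG : Set.InjOn G N := fun i hi j hj h => hGi i j (hmem i hi) (hmem j hj) h
  have d1 : Disjoint N (N.image F) := by
    rw [Finset.disjoint_left]
    intro x hx hx'
    obtain ⟨y, hy, rfl⟩ := Finset.mem_image.1 hx'
    have := (hF y (hmem y hy)).2.2
    rw [hmem _ hx] at this; simp at this
  have d2 : Disjoint (N ∪ N.image F) (N.image G) := by
    rw [Finset.disjoint_left]
    intro x hx hx'
    obtain ⟨y, hy, rfl⟩ := Finset.mem_image.1 hx'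
    have h1 := (hG y (hmem y hy)).2.2
    rcases Finset.mem_union.1 hx with hx | hx
    · rw [hmem _ hx] at h1; simp at h1
    · obtain ⟨z, hz, h⟩ := Finset.mem_image.1 hx
      have := (hF z (hmem z hz)).2.2
      rw [h, h1] at this; simp at this
  have hk : nu σ w = N.card := rfl
  set T := N ∪ N.image F ∪ N.image G with hT
  have cT : T.card = 3 * N.card := by
    rw [hT, Finset.card_union_of_disjoint d2, Finset.card_union_of_disjoint d1,
      Finset.card_image_of_injOn iF, Finset.card_image_of_injOn iG]; ring
  have cTc : T.card + Tᶜ.card = n := by rw [Finset.card_add_card_compl]; simp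
  refine ⟨by omega, fun i => ?_⟩
  set g : Fin n → ℤ := fun j => if (j : ℕ) < i then sign (σ j) else 0 with hg
  have hg1 : ∀ j, |g j| ≤ 1 := by
    intro j
    simp only [hg, sign]
    split_ifs <;> simp
  have hS : S σ i = ∑ j ∈ N, (g j + g (F j) + g (G j)) + ∑ j ∈ Tᶜ, g j := by
    have : S σ i = ∑ j, g j := rfl
    rw [this, ← Finset.sum_add_sum_compl T, hT, Finset.sum_union d2, Finset.sum_union d1,
      Finset.sum_image iF, Finset.sum_image iG, Finset.sum_add_distrib, Finset.sum_add_distrib]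
  have hb1 : |∑ j ∈ N, (g j + g (F j) + g (G j))| ≤ N.card := by
    refine (Finset.abs_sum_le_sum_abs _ _).trans ?_
    refine (Finset.sum_le_card_nsmul _ _ 1 ?_).trans (by simp)
    intro j hj
    obtain ⟨a1, a2, -⟩ := hF j (hmem j hj)
    obtain ⟨b1, b2, -⟩ := hG j (hmem j hj)
    rw [Fin.lt_def] at a1 b1
    simp only [hg, a2, b2]
    exact trip_aux _ _ _ _ _ a1 b1
  have hb2 : |∑ j ∈ Tᶜ, g j| ≤ Tᶜ.card := by
    refine (Finset.abs_sum_le_sum_abs _ _).trans ?_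
    exact (Finset.sum_le_card_nsmul _ _ 1 (fun j _ => hg1 j)).trans (by simp)
  have := abs_add_le (∑ j ∈ N, (g j + g (F j) + g (G j))) (∑ j ∈ Tᶜ, g j)
  rw [← hS] at this
  omega

/-- Local adjacency relation. -/
def Rel (σ : Fin n → Bool) (M : Fin n → Prop) (x y : Fin n) : Prop :=
  (M x → ¬ M y ∧ σ y = false ∧ y < x) ∧ (M y → ¬ M x ∧ σ x = true ∧ x < y) ∧
  (¬ M x → ¬ M y → σ x = true → σ y = true)

lemma exists_seating_of_list (hn : 2 ≤ n) (σ : Fin n → Bool) (M : Fin n → Prop) (x : Fin n) (l : List (Fin n))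
    (hc : List.IsChain (Rel σ M) (x :: l ++ [x])) (hnd : (x :: l).Nodup) (hall : ∀ j, j ∈ x :: l)
    (A : Finset (Fin n)) (hA : ∀ j ∈ A, M j) :
    ∃ w, IsSeating w ∧ A.card ≤ nu σ w := by
  classical
  have : NeZero n := ⟨by omega⟩
  set L := x :: l with hL
  have hlen : L.length = n := by
    have := Fintype.card_congr (hnd.getEquivOfForallMemList L hall)
    simpa using this
  let e : Fin n ≃ Fin n := (finCongr hlen.symm).trans (hnd.getEquivOfForallMemList L hall)
  have he : ∀ i : Fin n, e i = L[(i : ℕ)]'(by rw [hlen]; exact i.2) := fun i => rfl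
  have hone : ((1 : Fin n) : ℕ) = 1 := by
    rw [Fin.val_one', Nat.mod_eq_of_lt (by omega)]
  have hadj : ∀ i : Fin n, Rel σ M (e i) (e (i + 1)) := by
    intro i
    rw [List.isChain_iff_getElem] at hc
    have h := hc i (by simp [hlen])
    rw [List.getElem_append_left (by rw [hlen]; exact i.2)] at h
    rw [he, he]
    convert h using 1
    have hv : ((i + 1 : Fin n) : ℕ) = (i + 1) % n := by
      rw [Fin.val_add, hone]
    by_cases hi : (i : ℕ) + 1 < n
    · rw [List.getElem_append_left (by rw [hlen]; exact hi)]
      simp only [hv, Nat.mod_eq_of_lt hi]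
    · have hi' : (i : ℕ) + 1 = n := by have := i.2; omega
      rw [List.getElem_append_right (by rw [hlen]; omega)]
      simp only [hv, hi', Nat.mod_self]
      simp [hL]
  set c := e.symm 0 with hcdef
  let w : Equiv.Perm (Fin n) := (Equiv.addRight c).trans e
  have hw : ∀ s, w s = e (s + c) := fun s => rfl
  refine ⟨w, ?_, ?_⟩
  · intro i hi
    have : i = 0 := Fin.ext (by simpa using hi)
    subst this
    rw [hw]; simp [hcdef]
  · have hwadj : ∀ s, Rel σ M (w s) (w (s + 1)) := by
      intro s
      rw [hw, hw, add_right_comm]; exact hadj _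
    have ht : ∀ j, Rel σ M j (nxt w true j) := by
      intro j
      have := hwadj (w.symm j)
      simpa [nxt, nbr] using this
    have hf : ∀ j, Rel σ M (nxt w false j) j := by
      intro j
      have := hwadj (w.symm j - 1)
      simpa [nxt, nbr] using this
    have key := tk_good hn σ w M ?_ ?_
    · apply Finset.card_le_card
      intro j hj
      rw [mem_napkinless hn]
      exact (key j).1 (hA j hj)
    · intro j hM
      have h1 := ht j
      have h2 := hf j
      unfold Rel at h1 h2
      rcases hs : σ j
      · by_contra hcon
        push Not at hcon
        have := h2.2.2 hcon.1 hM (by simpa using hcon.2)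
        rw [hs] at this; simp at this
      · by_contra hcon
        push Not at hcon
        exact hcon.2 (h1.2.2 hM hcon.1 hs)
    · intro j hM b
      have h1 := ht j
      have h2 := hf j
      unfold Rel at h1 h2
      cases b
      · exact h2.2.1 hM
      · exact h1.1 hM

lemma exists_of_lt_count (p : ℕ → Prop) [DecidablePred p] (i N : ℕ) (h : i < Nat.count p N) :
    ∃ a < N, p a ∧ Nat.count p a = i := by
  induction N with
  | zero => simp at h
  | succ N ih =>
    rw [Nat.count_succ] at h
    by_cases hi : i < Nat.count p N
    · obtain ⟨a, ha, h⟩ := ih hi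
      exact ⟨a, by omega, h⟩
    · split_ifs at h with hp
      · exact ⟨N, by omega, hp, by omega⟩
      · omega

/-- preference predicate on naturals -/
def pp (σ : Fin n → Bool) (b : Bool) (x : ℕ) : Prop := ∃ h : x < n, σ ⟨x, h⟩ = b

instance (σ : Fin n → Bool) (b : Bool) : DecidablePred (pp σ b) := fun _ => by
  unfold pp; infer_instance

lemma pp_fin (σ : Fin n → Bool) (b : Bool) (j : Fin n) : pp σ b j ↔ σ j = b := by
  simp [pp]

lemma count_add (σ : Fin n → Bool) (i : ℕ) (hi : i ≤ n) :
    Nat.count (pp σ true) i + Nat.count (pp σ false) i = i := by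
  induction i with
  | zero => simp
  | succ i ih =>
    have := ih (by omega)
    rw [Nat.count_succ, Nat.count_succ]
    have h1 := pp_fin σ true ⟨i, hi⟩
    have h2 := pp_fin σ false ⟨i, hi⟩
    simp only at h1 h2
    rcases hs : σ ⟨i, hi⟩ <;> simp [h1, h2, hs] <;> omega

lemma S_succ (σ : Fin n → Bool) (i : ℕ) (hi : i < n) : S σ (i+1) = S σ i + sign (σ ⟨i, hi⟩) := by
  unfold S
  have : sign (σ ⟨i, hi⟩) = ∑ j : Fin n, if j = ⟨i, hi⟩ then sign (σ j) else 0 := by simp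
  rw [this, ← Finset.sum_add_distrib]
  apply Finset.sum_congr rfl
  intro j _
  by_cases h : j = ⟨i, hi⟩
  · subst h; simp
  · have h' : (j : ℕ) ≠ i := fun h' => h (Fin.ext h')
    have : (j : ℕ) < i + 1 ↔ (j : ℕ) < i := by omega
    simp [h, this]

lemma S_eq_count (σ : Fin n → Bool) (i : ℕ) (hi : i ≤ n) :
    S σ i = Nat.count (pp σ true) i - Nat.count (pp σ false) i := by
  induction i with
  | zero => simp [S]
  | succ i ih =>
    have := ih (by omega)
    rw [Nat.count_succ, Nat.count_succ, S_succ σ i hi, this]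
    have h1 := pp_fin σ true ⟨i, hi⟩
    have h2 := pp_fin σ false ⟨i, hi⟩
    simp only at h1 h2
    rcases hs : σ ⟨i, hi⟩ <;> simp [h1, h2, hs, sign] <;> omega

/-- elements not among the first `k` pluses or minuses -/
def RR (σ : Fin n → Bool) (k : ℕ) (x : ℕ) : Prop :=
  ∃ b, pp σ b x ∧ k ≤ Nat.count (pp σ b) x

open Classical in
lemma count_RR (σ : Fin n → Bool) (k t : ℕ) :
    Nat.count (RR σ k) t = (Nat.count (pp σ true) t - k) + (Nat.count (pp σ false) t - k) := by
  induction t with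
  | zero => simp
  | succ t ih =>
    rw [Nat.count_succ, Nat.count_succ, Nat.count_succ, ih]
    have h0 : ¬ (pp σ true t ∧ pp σ false t) := by
      rintro ⟨⟨h, h1⟩, ⟨_, h2⟩⟩
      rw [h1] at h2; simp at h2
    have h1 : RR σ k t ↔ (pp σ true t ∧ k ≤ Nat.count (pp σ true) t) ∨ (pp σ false t ∧ k ≤ Nat.count (pp σ false) t) := by
      unfold RR; rw [Bool.exists_bool]; tauto
    by_cases ht : pp σ true t
    · have hf : ¬ pp σ false t := fun h => h0 ⟨ht, h⟩
      simp only [h1, ht, hf, true_and, false_and, or_false, if_true, if_false]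
      split_ifs <;> omega
    · by_cases hf : pp σ false t
      · simp only [h1, ht, hf, true_and, false_and, false_or, if_true, if_false]
        split_ifs <;> omega
      · simp [h1, ht, hf]

lemma chain_flat {α : Type*} (R : α → α → Prop) (M : α → Prop) {k : ℕ} (a m b : Fin k → α)
    (h1 : ∀ i, R (a i) (m i)) (h2 : ∀ i, R (m i) (b i)) (h3 : ∀ i y, ¬ M y → R (b i) y)
    (ha : ∀ i, ¬ M (a i)) (r : List α) (hr : r.IsChain R) (hr' : ∀ y ∈ r.head?, ¬ M y) (is : List (Fin k)) :
    (is.flatMap (fun i => [a i, m i, b i]) ++ r).IsChain R ∧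
    ∀ y ∈ (is.flatMap (fun i => [a i, m i, b i]) ++ r).head?, ¬ M y := by
  induction is with
  | nil => exact ⟨hr, hr'⟩
  | cons i is ih =>
    obtain ⟨ih1, ih2⟩ := ih
    rw [List.flatMap_cons]
    simp only [List.cons_append, List.nil_append]
    refine ⟨?_, ?_⟩
    · refine List.IsChain.cons_cons (h1 i) (List.IsChain.cons_cons (h2 i) ?_)
      exact List.IsChain.cons ih1 (fun y hy => h3 i y (ih2 y hy))
    · intro y hy
      simp at hy
      subst hy; exact ha i

open Classical in
lemma nu_lower (hn : 2 ≤ n) (σ : Fin n → Bool) (k : ℕ) (hk : 3 * k ≤ n) (hk1 : 1 ≤ k)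
    (hS : ∀ i ≤ n, |S σ i| + 2 * (k : ℤ) ≤ n) : ∃ w, IsSeating w ∧ k ≤ nu σ w := by
  have hcnt : ∀ i ≤ n, Nat.count (pp σ true) i + 2 * k ≤ n + Nat.count (pp σ false) i ∧
      Nat.count (pp σ false) i + 2 * k ≤ n + Nat.count (pp σ true) i := by
    intro i hi
    have h := hS i hi
    rw [S_eq_count σ i hi] at h
    have h1 := le_abs_self ((Nat.count (pp σ true) i : ℤ) - Nat.count (pp σ false) i)
    have h2 := neg_le_abs ((Nat.count (pp σ true) i : ℤ) - Nat.count (pp σ false) i)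
    omega
  have hn1 := count_add σ n le_rfl
  have hn2 := hcnt n le_rfl
  have hRn := count_RR σ k n
  have exP : ∀ b, ∀ i : Fin k, ∃ x : Fin n, σ x = b ∧ Nat.count (pp σ b) x = i := by
    intro b i
    obtain ⟨x, hx, h1, h2⟩ := exists_of_lt_count (pp σ b) i n (by
      have := i.2
      cases b <;> omega)
    exact ⟨⟨x, hx⟩, (pp_fin σ b ⟨x, hx⟩).1 h1, h2⟩
  have exM : ∀ i : Fin k, ∃ x : Fin n, RR σ k x ∧ Nat.count (RR σ k) x = n - 3 * k + i := by
    intro i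
    obtain ⟨x, hx, h1, h2⟩ := exists_of_lt_count (RR σ k) (n - 3 * k + i) n (by
      have := i.2
      omega)
    exact ⟨⟨x, hx⟩, h1, h2⟩
  choose a ha using exP true
  choose b hb using exP false
  choose m hm using exM
  let M : Fin n → Prop := fun j => RR σ k j ∧ n - 3 * k ≤ Nat.count (RR σ k) j
  have hmM : ∀ i, M (m i) := fun i => ⟨(hm i).1, by rw [(hm i).2]; omega⟩
  have nR : ∀ (c : Bool) (x : Fin n), σ x = c → Nat.count (pp σ c) x < k → ¬ RR σ k x := by
    rintro c x hc hx ⟨c', h1, h2⟩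
    rw [pp_fin, hc] at h1
    subst h1; omega
  have haM : ∀ i, ¬ M (a i) := fun i h => nR true _ (ha i).1 (by rw [(ha i).2]; exact i.2) h.1
  have hbM : ∀ i, ¬ M (b i) := fun i h => nR false _ (hb i).1 (by rw [(hb i).2]; exact i.2) h.1
  have hlt : ∀ i : Fin k, a i < m i ∧ b i < m i := by
    intro i
    have h1 : Nat.count (RR σ k) (m i + 1) = n - 3 * k + i + 1 := by
      rw [Nat.count_succ, if_pos (hm i).1, (hm i).2]
    rw [count_RR] at h1
    have h2 := hcnt (m i + 1) (by have := (m i).2; omega)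
    have h3 := count_add σ (m i + 1) (by have := (m i).2; omega)
    have h4 := i.2
    have h5 := (m i).2
    have ea : (a i : ℕ) ≠ m i := fun h => haM i (by rw [Fin.ext h]; exact hmM i)
    have eb : (b i : ℕ) ≠ m i := fun h => hbM i (by rw [Fin.ext h]; exact hmM i)
    have la : ¬ ((m i : ℕ) + 1 ≤ a i) := fun h => by
      have := Nat.count_monotone (pp σ true) h
      rw [(ha i).2] at this; omega
    have lb : ¬ ((m i : ℕ) + 1 ≤ b i) := fun h => by
      have := Nat.count_monotone (pp σ false) h
      rw [(hb i).2] at this; omega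
    rw [Fin.lt_def, Fin.lt_def]; omega
  have ainj : Function.Injective a := fun i j h => by
    have h1 := (ha i).2; rw [h, (ha j).2] at h1; exact Fin.ext h1.symm
  have binj : Function.Injective b := fun i j h => by
    have h1 := (hb i).2; rw [h, (hb j).2] at h1; exact Fin.ext h1.symm
  have minj : Function.Injective m := fun i j h => by
    have h1 := (hm i).2; rw [h, (hm j).2] at h1; exact Fin.ext (by omega)
  have ab : ∀ i j, a i ≠ b j := fun i j h => by
    have := (ha i).1; rw [h, (hb j).1] at this; simp at this
  have am : ∀ i j, a i ≠ m j := fun i j h => haM i (h ▸ hmM j)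
  have bm : ∀ i j, b i ≠ m j := fun i j h => hbM i (h ▸ hmM j)
  let rest : Bool → List (Fin n) := fun c =>
    (List.finRange n).filter (fun j => σ j = c ∧ ¬ M j ∧ k ≤ Nat.count (pp σ c) j)
  have hrest : ∀ c j, j ∈ rest c ↔ σ j = c ∧ ¬ M j ∧ k ≤ Nat.count (pp σ c) j := by
    intro c j; simp [rest]
  have hrn : ∀ c, (rest c).Nodup := fun c => (List.nodup_finRange n).filter _
  obtain ⟨k', rfl⟩ : ∃ k', k = k' + 1 := ⟨k - 1, by omega⟩
  let f : Fin (k'+1) → List (Fin n) := fun i => [a i, m i, b i]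
  let l := [m 0, b 0] ++ ((List.finRange k').map Fin.succ).flatMap f ++ (rest false ++ rest true)
  have hl : a 0 :: l = (List.finRange (k'+1)).flatMap f ++ (rest false ++ rest true) := by
    rw [List.finRange_succ, List.flatMap_cons]; rfl
  have hmemT : ∀ y, y ∈ (List.finRange (k'+1)).flatMap f ↔ ∃ i, y = a i ∨ y = m i ∨ y = b i := by
    intro y; simp [f]
  have hcard : (Finset.univ.image m).card = k' + 1 := by
    rw [Finset.card_image_of_injective _ minj]; simp
  rw [← hcard]
  apply exists_seating_of_list hn σ M (a 0) l
  · rw [hl, List.append_assoc]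
    refine (chain_flat (Rel σ M) M a m b ?_ ?_ ?_ haM _ ?_ ?_ _).1
    · intro i
      exact ⟨fun h => absurd h (haM i), fun _ => ⟨haM i, (ha i).1, (hlt i).1⟩, fun _ h => absurd (hmM i) h⟩
    · intro i
      exact ⟨fun _ => ⟨hbM i, (hb i).1, (hlt i).2⟩, fun h => absurd h (hbM i), fun h => absurd (hmM i) h⟩
    · intro i y hy
      refine ⟨fun h => absurd h (hbM i), fun h => absurd h hy, fun _ _ h => ?_⟩
      rw [(hb i).1] at h; simp at h
    · apply List.Pairwise.isChain
      have hnm : ∀ x y, ¬ M x → ¬ M y → (σ x = true → σ y = true) → Rel σ M x y :=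
        fun x y hx hy h => ⟨fun h => absurd h hx, fun h => absurd h hy, fun _ _ => h⟩
      rw [List.pairwise_append, List.pairwise_append]
      refine ⟨⟨?_, ?_, ?_⟩, List.pairwise_singleton _ _, ?_⟩
      · refine (hrn false).imp_of_mem ?_
        intro x y hx hy _
        rw [hrest] at hx hy
        exact hnm x y hx.2.1 hy.2.1 (by simp [hx.1])
      · refine (hrn true).imp_of_mem ?_
        intro x y hx hy _
        rw [hrest] at hx hy
        exact hnm x y hx.2.1 hy.2.1 (by simp [hy.1])
      · intro x hx y hy
        rw [hrest] at hx hy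
        exact hnm x y hx.2.1 hy.2.1 (by simp [hy.1])
      · intro x hx y hy
        rw [List.mem_singleton] at hy
        subst hy
        have hx' : ¬ M x := by
          rcases List.mem_append.1 hx with h | h <;> rw [hrest] at h <;> exact h.2.1
        exact hnm _ _ hx' (haM 0) (fun _ => (ha 0).1)
    · intro y hy
      have hy := List.mem_of_mem_head? hy
      simp only [List.mem_append, hrest, List.mem_singleton] at hy
      rcases hy with (h | h) | h
      · exact h.2.1
      · exact h.2.1
      · rw [h]; exact haM 0
  · rw [hl, List.nodup_append', List.nodup_append']
    refine ⟨?_, ⟨hrn _, hrn _, ?_⟩, ?_⟩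
    · rw [List.nodup_flatMap]
      refine ⟨fun i _ => ?_, ?_⟩
      · simp [f, ab, am, (bm _ _).symm]
      · refine (List.nodup_finRange _).imp ?_
        intro i j hij
        have h1 := ainj.ne hij
        have h2 := binj.ne hij
        have h3 := minj.ne hij
        simp [Function.onFun, f, ab, am, bm, h1.symm, h2.symm, h3.symm, (bm _ _).symm, (am _ _).symm, (ab _ _).symm]
    · intro x hx hy
      rw [hrest] at hx hy
      rw [hx.1] at hy; simp at hy
    · intro x hx hy
      rw [hmemT] at hx
      rw [List.mem_append, hrest, hrest] at hy
      obtain ⟨i, rfl | rfl | rfl⟩ := hx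
      · rw [(ha i).1, (ha i).2] at hy
        have := i.2
        rcases hy with h | h
        · simp at h
        · omega
      · rcases hy with h | h <;> exact h.2.1 (hmM i)
      · rw [(hb i).1, (hb i).2] at hy
        have := i.2
        rcases hy with h | h
        · omega
        · simp at h
  · intro j
    rw [hl, List.mem_append, hmemT, List.mem_append, hrest, hrest]
    by_cases hM : M j
    · left
      obtain ⟨h1, h2⟩ := hM
      have h3 := Nat.count_strict_mono h1 j.2
      obtain ⟨i, hi⟩ := Nat.exists_eq_add_of_le h2
      refine ⟨⟨i, by omega⟩, Or.inr (Or.inl ?_)⟩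
      apply Fin.ext
      apply Nat.count_injective h1 (hm _).1
      rw [(hm _).2, hi]
    · rcases hs : σ j
      · by_cases hc : Nat.count (pp σ false) j < k' + 1
        · left
          refine ⟨⟨_, hc⟩, Or.inr (Or.inr ?_)⟩
          apply Fin.ext
          apply Nat.count_injective ((pp_fin σ _ _).2 hs) ((pp_fin σ _ _).2 (hb _).1)
          rw [(hb _).2]
        · right; left
          exact ⟨rfl, hM, by omega⟩
      · by_cases hc : Nat.count (pp σ true) j < k' + 1
        · left
          refine ⟨⟨_, hc⟩, Or.inl ?_⟩
          apply Fin.ext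
          apply Nat.count_injective ((pp_fin σ _ _).2 hs) ((pp_fin σ _ _).2 (ha _).1)
          rw [(ha _).2]
        · right; right
          exact ⟨rfl, hM, by omega⟩
  · intro j hj
    obtain ⟨i, -, rfl⟩ := Finset.mem_image.1 hj
    exact hmM i

lemma le_nuMax_iff (hn : 2 ≤ n) (σ : Fin n → Bool) (k : ℕ) (hk : 1 ≤ k) :
    k ≤ nuMax σ ↔ 3 * k ≤ n ∧ ∀ i ≤ n, |S σ i| + 2 * (k : ℤ) ≤ n := by
  unfold nuMax
  rw [Finset.le_sup_iff (show (⊥ : ℕ) < k from hk)]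
  constructor
  · rintro ⟨w, -, h⟩
    obtain ⟨h1, h2⟩ := nu_upper hn σ w
    refine ⟨by omega, fun i _ => ?_⟩
    have := h2 i
    omega
  · rintro ⟨h1, h2⟩
    obtain ⟨w, hw, h⟩ := nu_lower hn σ k h1 hk h2
    exact ⟨w, by simpa using hw, h⟩

def Hit (σ : Fin n → Bool) (h : ℤ) : Prop := ∃ i ≤ n, h ≤ S σ i

lemma S_zero (σ : Fin n → Bool) : S σ 0 = 0 := by simp [S]

lemma S_cons (b : Bool) (τ : Fin n → Bool) (i : ℕ) :
    S (Fin.cons b τ : Fin (n+1) → Bool) (i+1) = sign b + S τ i := by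
  simp [S, Fin.sum_univ_succ]

lemma Hit_cons (b : Bool) (τ : Fin n → Bool) (h : ℤ) (hh : 1 ≤ h) :
    Hit (Fin.cons b τ : Fin (n+1) → Bool) h ↔ Hit τ (h - sign b) := by
  constructor
  · rintro ⟨i, hi, h1⟩
    cases i with
    | zero => rw [S_zero] at h1; omega
    | succ i =>
      rw [S_cons] at h1
      exact ⟨i, by omega, by omega⟩
  · rintro ⟨i, hi, h1⟩
    exact ⟨i+1, by omega, by rw [S_cons]; omega⟩

lemma sign_le (b : Bool) : |sign b| ≤ 1 := by cases b <;> simp [sign]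

lemma S_diff (σ : Fin n → Bool) (i d : ℕ) (h : i + d ≤ n) : |S σ (i+d) - S σ i| ≤ d := by
  induction d with
  | zero => simp
  | succ d ih =>
    have h1 := ih (by omega)
    rw [← add_assoc, S_succ σ (i+d) (by omega)]
    have h2 := sign_le (σ ⟨i+d, by omega⟩)
    rw [abs_le] at *
    push_cast
    omega

lemma S_le (σ : Fin n → Bool) (i : ℕ) (h : i ≤ n) : |S σ i| ≤ i := by
  have := S_diff σ 0 i (by omega)
  simpa [S_zero] using this

open Classical in
noncomputable def NN (n : ℕ) (h : ℤ) : ℕ := (Finset.univ.filter fun σ : Fin n → Bool => Hit σ h).card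

lemma NN_big (n : ℕ) (h : ℤ) (hh : (n : ℤ) < h) : NN n h = 0 := by
  classical
  unfold NN
  rw [Finset.card_eq_zero, Finset.filter_eq_empty_iff]
  rintro σ - ⟨i, hi, h1⟩
  have := S_le σ i hi
  rw [abs_le] at this
  omega

lemma NN_zero (n : ℕ) : NN n 0 = 2 ^ n := by
  classical
  unfold NN
  rw [Finset.filter_true_of_mem]
  · simp
  · intro σ _
    exact ⟨0, by omega, by rw [S_zero]⟩

lemma NN_succ (n : ℕ) (h : ℤ) (hh : 1 ≤ h) : NN (n+1) h = NN n (h - 1) + NN n (h + 1) := by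
  classical
  unfold NN
  simp only [Finset.card_filter]
  rw [← (Fin.consEquiv (fun _ : Fin (n+1) => Bool)).sum_comp, Fintype.sum_prod_type]
  simp only [Fin.consEquiv_apply, Fintype.sum_bool]
  congr 1
  · apply Finset.sum_congr rfl
    intro τ _
    have := Hit_cons true τ h hh
    simp only [sign, if_true] at this
    exact if_congr this rfl rfl
  · apply Finset.sum_congr rfl
    intro τ _
    have := Hit_cons false τ h hh
    simp [sign] at this
    exact if_congr this rfl rfl

lemma NN_eq (n : ℕ) : ∀ k : ℕ, 2 * k ≤ n + 1 →
    NN n ((n : ℤ) + 1 - 2 * k) = 2 * ∑ j ∈ Finset.range k, n.choose j := by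
  induction n with
  | zero =>
    intro k hk
    obtain rfl : k = 0 := by omega
    simpa using NN_big 0 1 (by norm_num)
  | succ n ih =>
    intro k hk
    rcases Nat.lt_or_ge (n + 1) (2 * k) with h | h
    · have h0 : ((n + 1 : ℕ) : ℤ) + 1 - 2 * k = 0 := by push_cast; omega
      rw [h0, NN_zero]
      obtain ⟨m, rfl⟩ : ∃ m, k = m + 1 := ⟨k - 1, by omega⟩
      obtain rfl : n = 2 * m := by omega
      rw [Nat.sum_range_choose_halfway, pow_succ, pow_mul]; norm_num [mul_comm]
    · cases k with
      | zero => simpa using NN_big (n+1) _ (by push_cast; omega)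
      | succ k =>
        rw [NN_succ _ _ (by push_cast; omega)]
        have h1 := ih (k+1) h
        have h2 := ih k (by omega)
        have e1 : ((n + 1 : ℕ) : ℤ) + 1 - 2 * (k + 1 : ℕ) - 1 = (n : ℤ) + 1 - 2 * (k + 1 : ℕ) := by push_cast; ring
        have e2 : ((n + 1 : ℕ) : ℤ) + 1 - 2 * (k + 1 : ℕ) + 1 = (n : ℤ) + 1 - 2 * k := by push_cast; ring
        rw [e1, e2, h1, h2, Finset.sum_range_succ' (fun j => (n+1).choose j)]
        simp only [Nat.choose_succ_succ, Finset.sum_add_distrib]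
        rw [Finset.sum_range_succ' (fun j => n.choose j)]
        simp
        ring

lemma S_not (σ : Fin n → Bool) (i : ℕ) : S (fun j => !σ j) i = - S σ i := by
  unfold S
  rw [← Finset.sum_neg_distrib]
  apply Finset.sum_congr rfl
  intro j _
  split_ifs
  · rcases hs : σ j <;> simp [sign, hs]
  · simp

open Classical in
lemma card_good (hn : 2 ≤ n) (k : ℕ) (hk : 1 ≤ k) (hk3 : 3 * k ≤ n) :
    (Finset.univ.filter fun σ : Fin n → Bool => k ≤ nuMax σ).card + 4 * ∑ j ∈ Finset.range k, n.choose j = 2 ^ n := by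
  set h : ℤ := (n : ℤ) + 1 - 2 * k with hh
  have hNN := NN_eq n k (by omega)
  have hneg : (Finset.univ.filter fun σ : Fin n → Bool => Hit (fun j => !σ j) h).card = NN n h := by
    unfold NN
    refine Finset.card_bij' (fun σ _ => fun j => !σ j) (fun σ _ => fun j => !σ j) ?_ ?_ ?_ ?_ <;> simp
  have hdisj : Disjoint (Finset.univ.filter fun σ : Fin n → Bool => Hit σ h)
      (Finset.univ.filter fun σ : Fin n → Bool => Hit (fun j => !σ j) h) := by
    rw [Finset.disjoint_filter]
    rintro σ - ⟨i, hi, h1⟩ ⟨j, hj, h2⟩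
    rw [S_not] at h2
    have a1 := S_le σ i hi
    have a2 := S_le σ j hj
    rw [abs_le] at a1 a2
    rcases le_total i j with hij | hij
    · obtain ⟨d, rfl⟩ := Nat.exists_eq_add_of_le hij
      have := S_diff σ i d hj
      rw [abs_le] at this
      omega
    · obtain ⟨d, rfl⟩ := Nat.exists_eq_add_of_le hij
      have := S_diff σ j d hi
      rw [abs_le] at this
      omega
  have hcompl : (Finset.univ.filter fun σ : Fin n → Bool => ¬ k ≤ nuMax σ) =
      (Finset.univ.filter fun σ : Fin n → Bool => Hit σ h) ∪
      (Finset.univ.filter fun σ : Fin n → Bool => Hit (fun j => !σ j) h) := by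
    ext σ
    simp only [Finset.mem_filter, Finset.mem_univ, true_and, Finset.mem_union]
    rw [le_nuMax_iff hn σ k hk]
    constructor
    · intro hc
      have : ∃ i ≤ n, ¬ (|S σ i| + 2 * (k : ℤ) ≤ n) := by
        by_contra hcon
        push Not at hcon
        exact hc ⟨hk3, hcon⟩
      obtain ⟨i, hi, h1⟩ := this
      rcases abs_cases (S σ i) with h2 | h2
      · left; exact ⟨i, hi, by omega⟩
      · right; exact ⟨i, hi, by rw [S_not]; omega⟩
    · rintro (⟨i, hi, h1⟩ | ⟨i, hi, h1⟩) ⟨-, hc⟩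
      · have := hc i hi
        have := le_abs_self (S σ i)
        omega
      · rw [S_not] at h1
        have := hc i hi
        have := neg_le_abs (S σ i)
        omega
  have htot := Finset.card_filter_add_card_filter_not (s := (Finset.univ : Finset (Fin n → Bool))) (fun σ => k ≤ nuMax σ)
  rw [hcompl, Finset.card_union_of_disjoint hdisj, hneg] at htot
  have : (Finset.univ : Finset (Fin n → Bool)).card = 2 ^ n := by simp
  rw [this] at htot
  have e : (Finset.univ.filter fun σ : Fin n → Bool => Hit σ h).card = NN n h := rfl
  rw [e, hNN] at htot
  omega

lemma sum_tri (c : ℕ → ℤ) (q : ℕ) :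
    ∑ k ∈ Finset.range q, ∑ j ∈ Finset.range (k+1), c j = ∑ j ∈ Finset.range q, ((q : ℤ) - j) * c j := by
  induction q with
  | zero => simp
  | succ q ih =>
    rw [Finset.sum_range_succ, ih, Finset.sum_range_succ, Finset.sum_range_succ, ← add_assoc,
      ← Finset.sum_add_distrib]
    congr 1
    · apply Finset.sum_congr rfl
      intro j _; push_cast; ring
    · push_cast; ring

lemma sum_nuMax (hn : 3 ≤ n) (q : ℕ) (hq : q = n / 3) :
    (∑ σ : Fin n → Bool, (nuMax σ : ℤ))
      = 2 ^ n * (q : ℤ) - 4 * ∑ k ∈ Finset.range q, ((q : ℤ) - (k : ℤ)) * (n.choose k : ℤ) := by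
  classical
  have hle : ∀ σ : Fin n → Bool, nuMax σ ≤ q := by
    intro σ
    by_contra hc
    have := ((le_nuMax_iff (by omega) σ (q+1) (by omega)).1 (by omega)).1
    omega
  have h1 : ∀ σ : Fin n → Bool, (nuMax σ : ℤ) = ∑ k ∈ Finset.range q, if k + 1 ≤ nuMax σ then (1 : ℤ) else 0 := by
    intro σ
    rw [← Finset.sum_filter]
    have : (Finset.range q).filter (fun k => k + 1 ≤ nuMax σ) = Finset.range (nuMax σ) := by
      ext k
      have := hle σ
      simp; omega
    rw [this]; simp
  simp_rw [h1]
  rw [Finset.sum_comm]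
  have h2 : ∀ k ∈ Finset.range q, (∑ σ : Fin n → Bool, if k + 1 ≤ nuMax σ then (1 : ℤ) else 0) =
      2 ^ n - 4 * ∑ j ∈ Finset.range (k+1), (n.choose j : ℤ) := by
    intro k hk
    rw [Finset.mem_range] at hk
    have := card_good (n := n) (by omega) (k+1) (by omega) (by omega)
    have h3 : ((Finset.univ.filter fun σ : Fin n → Bool => k + 1 ≤ nuMax σ).card : ℤ) + 4 * ∑ j ∈ Finset.range (k+1), (n.choose j : ℤ) = 2 ^ n := by
      exact_mod_cast this
    rw [← h3, ← Finset.sum_filter]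
    simp
  rw [Finset.sum_congr rfl h2, Finset.sum_sub_distrib, ← Finset.mul_sum, sum_tri]
  simp
  ring

/-- For `n ≥ 3` and `q = ⌊n/3⌋`, the expected (over uniformly random
preference orders) maximal number of napkinless diners is
`E_n = q - 2^{-(n-2)} ∑_{k<q} (q-k)·C(n,k)`; equivalently,
`∑_σ ν_max(σ) = 2ⁿ·q - 4·∑_{k<q} (q-k)·C(n,k)`. -/
theorem statement15 (n : ℕ) (hn : 3 ≤ n) (q : ℕ) (hq : q = n / 3) :
    (∑ σ : Fin n → Bool, (nuMax σ : ℚ)) / 2 ^ n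
      = (q : ℚ) - (1 / 2 ^ (n - 2)) *
          ∑ k ∈ Finset.range q, ((q : ℚ) - (k : ℚ)) * (n.choose k : ℚ) ∧
    (∑ σ : Fin n → Bool, (nuMax σ : ℤ))
      = 2 ^ n * (q : ℤ) - 4 * ∑ k ∈ Finset.range q, ((q : ℤ) - (k : ℤ)) * (n.choose k : ℤ) := by
  have h := sum_nuMax hn q hq
  refine ⟨?_, h⟩
  have h' : (∑ σ : Fin n → Bool, (nuMax σ : ℚ))
      = 2 ^ n * (q : ℚ) - 4 * ∑ k ∈ Finset.range q, ((q : ℚ) - (k : ℚ)) * (n.choose k : ℚ) := by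
    exact_mod_cast congrArg (fun z : ℤ => (z : ℚ)) h
  rw [h']
  obtain ⟨m, rfl⟩ : ∃ m, n = m + 2 := ⟨n - 2, by omega⟩
  rw [Nat.add_sub_cancel]
  have : (2 : ℚ) ^ (m + 2) = 4 * 2 ^ m := by ring
  rw [this]
  field_simp

end Napkin
end
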